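/- Let n = h + d where h ≥ 4 is a Hadamard order and 0 ≤ d ≤ 3. Then D(n)/n^{n/2} ≥ (2/(π·e))^{d/2}, and the inequality is strict if d > 0. -/

import Mathlib

open Matrix

/-- A positive integer `m` is a Hadamard order if there is an `m × m` matrix
with entries in `{−1, 1}` satisfying `Aᵀ A = m I`. -/
def IsHadamardOrder (m : ℕ) : Prop :=
  ∃ A : Matrix (Fin m) (Fin m) ℝ,
    (∀ i j, A i j = 1 ∨ A i j = -1) ∧ Aᵀ * A = (m : ℝ) • 1

/-- `D(n)`: the maximal determinant of an `n × n` matrix with entries in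
`{−1, 1}`. -/
noncomputable def maxDet (n : ℕ) : ℝ :=
  sSup {x : ℝ | ∃ M : Matrix (Fin n) (Fin n) ℝ,
    (∀ i j, M i j = 1 ∨ M i j = -1) ∧ M.det = x}

/-! Border a Hadamard matrix `A` of order `h` by `d` columns of independent random signs and by `d`
rows of signs, each chosen to match one of the new columns. The Schur complement of `A` turns the
determinant of the bordered matrix, up to sign, into `√(h ^ h)` times `det (K - D)`, where `D` is
the corner that remains to be filled. Since the determinant is affine in each row, `-1` may be used
for `D` although it is not a sign matrix. The entries of `K` have mean square `1`, and its diagonal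
entries have as mean the mean `μ` of the absolute value of a sum of `h` random signs, so some choice
of the signs makes `det (K + 1)` at least `μ + 1`, `(μ + 1) ^ 2 - 1` or
`(μ + 1) ^ 3 - 3 * (μ + 1) - 2` for `d = 1, 2, 3`. The Wallis product bounds `μ ^ 2` below by
`(2 / π) * (h - 1)`, and `(1 + d / h) ^ h ≤ exp d` accounts for the factor `e`. The case `h = 4`,
`d = 3` is too small for this estimate; there a minor of a Hadamard matrix of order `8` serves. -/

open scoped BigOperators symmDiff

section SignMatrix

variable {m n ι : Type*}

/-- Matrices with entries in `{-1, 1}`, over arbitrary index types: the entry condition of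
`IsHadamardOrder` and `maxDet`, to which it unfolds. -/
def IsSignMatrix (M : Matrix m n ℝ) : Prop :=
  ∀ i j, M i j = 1 ∨ M i j = -1

lemma bddAbove_det_isSignMatrix (n : ℕ) :
    BddAbove {x : ℝ | ∃ M : Matrix (Fin n) (Fin n) ℝ, IsSignMatrix M ∧ M.det = x} := by
  refine ⟨n.factorial • 1 ^ n, ?_⟩
  rintro _ ⟨M, hM, rfl⟩
  have hentry (i j) : AbsoluteValue.abs (M i j) ≤ 1 := by
    rcases hM i j with h | h <;> simp [h]
  simpa only [Fintype.card_fin] using (le_abs_self _).trans (Matrix.det_le hentry)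

variable [Fintype ι] [DecidableEq ι]

lemma IsSignMatrix.det_le_maxDet {M : Matrix ι ι ℝ} (hM : IsSignMatrix M) :
    M.det ≤ maxDet (Fintype.card ι) := by
  let e := Fintype.equivFin ι
  exact le_csSup (bddAbove_det_isSignMatrix _)
    ⟨M.reindex e e, fun i j => hM (e.symm i) (e.symm j), M.det_reindex_self e⟩

lemma IsSignMatrix.abs_det_le_maxDet {M : Matrix ι ι ℝ} (hM : IsSignMatrix M) :
    |M.det| ≤ maxDet (Fintype.card ι) := by
  refine abs_le'.2 ⟨hM.det_le_maxDet, ?_⟩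
  rcases isEmpty_or_nonempty ι with _ | ⟨⟨i₀⟩⟩
  · have hdet : M.det = 1 := Matrix.det_isEmpty
    linarith [hM.det_le_maxDet]
  · have hneg : IsSignMatrix (M.updateRow i₀ (-M i₀)) := by
      intro i j
      rcases eq_or_ne i i₀ with rfl | hi
      · simpa [neg_eq_iff_eq_neg, or_comm] using hM i j
      · simpa [hi] using hM i j
    calc -M.det = (M.updateRow i₀ ((-1 : ℝ) • M i₀)).det := by
          rw [Matrix.det_updateRow_smul, Matrix.updateRow_eq_self, neg_one_mul]
      _ ≤ maxDet (Fintype.card ι) := by simpa using hneg.det_le_maxDet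

lemma maxDet_nonneg (n : ℕ) : 0 ≤ maxDet n := by
  have hones : IsSignMatrix (Matrix.of fun _ _ : Fin n => (1 : ℝ)) := fun _ _ => Or.inl rfl
  simpa using (abs_nonneg _).trans hones.abs_det_le_maxDet

lemma det_updateRow_eq_dotProduct (M : Matrix ι ι ℝ) (i : ι) (v : ι → ℝ) :
    (M.updateRow i v).det = v ⬝ᵥ fun j => M.adjugate j i := by
  rw [← Matrix.cramer_transpose_apply, Matrix.cramer_eq_adjugate_mulVec,
    ← Matrix.adjugate_transpose, Matrix.mulVec_transpose, Matrix.vecMul]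

lemma exists_sign_row_det_le (M : Matrix ι ι ℝ) (i : ι) (f e : ι → ℝ) (he : ∀ j, |e j| ≤ 1) :
    ∃ s : ι → ℝ, (∀ j, s j = 1 ∨ s j = -1) ∧
      (M.updateRow i (f - e)).det ≤ (M.updateRow i (f - s)).det := by
  let s : ι → ℝ := fun j => if 0 ≤ M.adjugate j i then -1 else 1
  refine ⟨s, fun j => by by_cases h : 0 ≤ M.adjugate j i <;> simp [s, h], ?_⟩
  simp only [det_updateRow_eq_dotProduct]
  refine Finset.sum_le_sum fun j _ => ?_
  have hej := abs_le.1 (he j)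
  by_cases h : 0 ≤ M.adjugate j i
  · simp only [Pi.sub_apply, s, h, if_true]
    nlinarith
  · simp only [Pi.sub_apply, s, h, if_false]
    nlinarith

-- The determinant is affine in each row, so over a cube it is maximal at a vertex.
lemma exists_isSignMatrix_det_sub_le (F E : Matrix ι ι ℝ) (hE : ∀ i j, |E i j| ≤ 1) :
    ∃ S : Matrix ι ι ℝ, IsSignMatrix S ∧ (F - E).det ≤ (F - S).det := by
  suffices H : ∀ R : Finset ι, ∃ S : Matrix ι ι ℝ, (∀ i ∈ R, ∀ j, S i j = 1 ∨ S i j = -1) ∧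
      (∀ i ∉ R, S i = E i) ∧ (F - E).det ≤ (F - S).det by
    obtain ⟨S, hS, -, hdet⟩ := H Finset.univ
    exact ⟨S, fun i => hS i (Finset.mem_univ i), hdet⟩
  intro R
  induction R using Finset.induction_on with
  | empty => exact ⟨E, by simp, fun _ _ => rfl, le_rfl⟩
  | insert i R hi ih =>
    obtain ⟨S, hsign, hS, hdet⟩ := ih
    obtain ⟨s, hs, hrow⟩ := exists_sign_row_det_le (F - S) i (F i) (E i) (hE i)
    refine ⟨S.updateRow i s, fun k hk j => ?_, fun k hk => ?_, hdet.trans ?_⟩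
    · rcases eq_or_ne k i with rfl | hki
      · simpa using hs j
      · simpa [hki] using hsign k (Finset.mem_of_mem_insert_of_ne hk hki) j
    · rw [Finset.mem_insert, not_or] at hk
      rw [← hS k hk.2]
      exact Matrix.updateRow_ne hk.1
    · have hupdate (v : ι → ℝ) : (F - S).updateRow i (F i - v) = F - S.updateRow i v := by
        ext k j
        rcases eq_or_ne k i with rfl | hki <;> simp [*]
      rwa [hupdate, hupdate, ← hS i hi, Matrix.updateRow_eq_self] at hrow

end SignMatrix

section Hadamard

variable {ι κ : Type*} [Fintype ι] [DecidableEq ι] [Fintype κ] [DecidableEq κ]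

lemma IsSignMatrix.of_isHadamard {A : Matrix ι ι ℝ} (hA : A.IsHadamard) : IsSignMatrix A :=
  fun i j => Unitary.mem_iff_eq_one_or_eq_neg_one.1 (hA.apply_mem i j)

lemma transpose_mul_self_of_isHadamard {A : Matrix ι ι ℝ} (hA : A.IsHadamard) :
    Aᵀ * A = (Fintype.card ι : ℝ) • 1 := by
  simpa only [Matrix.conjTranspose_eq_transpose_of_trivial] using hA.conjTranspose_mul

lemma isHadamardOrder_iff (n : ℕ) :
    IsHadamardOrder n ↔ ∃ A : Matrix (Fin n) (Fin n) ℝ, A.IsHadamard := by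
  refine exists_congr fun A => ⟨fun ⟨hsign, hmul⟩ => ?_, fun hA =>
    ⟨IsSignMatrix.of_isHadamard hA, by simpa using transpose_mul_self_of_isHadamard hA⟩⟩
  rcases Nat.eq_zero_or_pos n with rfl | hn
  · exact ⟨fun i => i.elim0, Subsingleton.elim _ _, Subsingleton.elim _ _⟩
  · rw [← Matrix.isHadamard_transpose_iff, Matrix.isHadamard_iff_mul_conjTranspose
      (IsRegular.of_ne_zero (by simpa using hn.ne'))]
    exact ⟨fun i j => Unitary.mem_iff_eq_one_or_eq_neg_one.2 (hsign j i), by simpa using hmul⟩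

lemma IsHadamardOrder.of_isHadamard {A : Matrix ι ι ℝ} (hA : A.IsHadamard) :
    IsHadamardOrder (Fintype.card ι) :=
  (isHadamardOrder_iff _).2 ⟨_, hA.reindex (Fintype.equivFin ι) (Fintype.equivFin ι)⟩

lemma four_dvd_card_of_isHadamard {A : Matrix ι ι ℝ} (hA : A.IsHadamard)
    (hcard : 2 < Fintype.card ι) : 4 ∣ Fintype.card ι := by
  have hsign := IsSignMatrix.of_isHadamard hA
  choose B hB hBA using fun i j => show ∃ z : ℤ, z ∈ unitary ℤ ∧ (z : ℝ) = A i j by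
    rcases hsign i j with h | h
    · exact ⟨1, by simp, by simp [h]⟩
    · exact ⟨-1, by simp [Unitary.mem_iff], by simp [h]⟩
  refine ((Matrix.isHadamard_iff_mul_conjTranspose (A := Matrix.of B)
    (.of_ne_zero (by exact_mod_cast (zero_lt_two.trans hcard).ne'))).2 ⟨hB, ?_⟩).four_dvd_card hcard
  ext i j
  have hij := congrFun₂ (transpose_mul_self_of_isHadamard (hA.transpose)) i j
  simp only [Matrix.mul_apply, Matrix.transpose_apply, Matrix.smul_apply, Matrix.one_apply,
    ← hBA, smul_eq_mul] at hij
  simp only [Matrix.mul_apply, Matrix.conjTranspose_apply, star_trivial, Matrix.smul_apply,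
    Matrix.one_apply, Matrix.of_apply]
  exact_mod_cast hij

lemma even_card_of_isHadamard {A : Matrix ι ι ℝ} (hA : A.IsHadamard) (hcard : 2 < Fintype.card ι) :
    Even (Fintype.card ι) :=
  even_iff_two_dvd.2 ((by norm_num : 2 ∣ 4).trans (four_dvd_card_of_isHadamard hA hcard))

lemma isHadamard_two : (!![1, 1; 1, -1] : Matrix (Fin 2) (Fin 2) ℝ).IsHadamard := by
  refine ⟨fun i j => ?_, ?_, ?_⟩
  · fin_cases i <;> fin_cases j <;> simp [Unitary.mem_iff]
  · ext i j
    fin_cases i <;> fin_cases j <;> norm_num [Matrix.mul_apply]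
  · ext i j
    fin_cases i <;> fin_cases j <;> norm_num [Matrix.mul_apply]

lemma IsHadamardOrder.two_mul {n : ℕ} (hn : IsHadamardOrder n) : IsHadamardOrder (2 * n) := by
  obtain ⟨A, hA⟩ := (isHadamardOrder_iff n).1 hn
  simpa using IsHadamardOrder.of_isHadamard (isHadamard_two.kronecker hA)

lemma abs_det_of_isHadamard {A : Matrix ι ι ℝ} (hA : A.IsHadamard) :
    |A.det| = √((Fintype.card ι : ℝ) ^ Fintype.card ι) := by
  rw [← hA.det_mul_star_det, star_trivial, Real.sqrt_mul_self_eq_abs]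

lemma IsHadamardOrder.sqrt_le_maxDet {n : ℕ} (hn : IsHadamardOrder n) :
    √((n : ℝ) ^ n) ≤ maxDet n := by
  obtain ⟨A, hA⟩ := (isHadamardOrder_iff n).1 hn
  simpa [abs_det_of_isHadamard hA] using (IsSignMatrix.of_isHadamard hA).abs_det_le_maxDet

-- The minors of a Hadamard matrix are the entries of its adjugate, which is a multiple of `Aᵀ`.
lemma IsHadamardOrder.sqrt_le_mul_maxDet {n : ℕ} (hn : IsHadamardOrder (n + 1)) :
    √(((n + 1 : ℕ) : ℝ) ^ (n + 1)) ≤ ((n + 1 : ℕ) : ℝ) * maxDet n := by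
  obtain ⟨A, hA⟩ := (isHadamardOrder_iff (n + 1)).1 hn
  have hsign := IsSignMatrix.of_isHadamard hA
  have hadj : A.det • Aᵀ = ((n + 1 : ℕ) : ℝ) • A.adjugate := by
    have := congrArg (· * A.adjugate) (transpose_mul_self_of_isHadamard hA)
    simpa [Matrix.mul_assoc, Matrix.mul_adjugate] using this
  have hentry := congrArg abs (congrFun (congrFun hadj 0) 0)
  have hone : |A 0 0| = 1 := by rcases hsign 0 0 with h | h <;> simp [h]
  have hminor : |(A.submatrix Fin.succ Fin.succ).det| ≤ maxDet n := by
    simpa using IsSignMatrix.abs_det_le_maxDet (M := A.submatrix Fin.succ Fin.succ)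
      fun i j => hsign _ _
  calc √(((n + 1 : ℕ) : ℝ) ^ (n + 1)) = |A.det| := by
        simpa using (abs_det_of_isHadamard hA).symm
    _ = ((n + 1 : ℕ) : ℝ) * |(A.submatrix Fin.succ Fin.succ).det| := by
        simpa [abs_mul, hone, Matrix.adjugate_fin_succ_eq_det_submatrix,
          abs_of_nonneg (by positivity : (0 : ℝ) ≤ n + 1)] using hentry
    _ ≤ ((n + 1 : ℕ) : ℝ) * maxDet n := by gcongr

lemma abs_det_fromBlocks_of_isHadamard [Nonempty ι] {A : Matrix ι ι ℝ} (hA : A.IsHadamard)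
    (B : Matrix ι κ ℝ) (C : Matrix κ ι ℝ) (D : Matrix κ κ ℝ) :
    |(Matrix.fromBlocks A B C D).det| = √((Fintype.card ι : ℝ) ^ Fintype.card ι) *
      |((Fintype.card ι : ℝ)⁻¹ • (C * Aᵀ * B) - D).det| := by
  have hinv : ((Fintype.card ι : ℝ)⁻¹ • Aᵀ) * A = 1 := by
    rw [Matrix.smul_mul, transpose_mul_self_of_isHadamard hA, smul_smul,
      inv_mul_cancel₀ (by positivity), one_smul]
  let _ : Invertible A := _root_.invertibleOfLeftInverse A _ hinv
  have hschur : D - C * ⅟A * B = -((Fintype.card ι : ℝ)⁻¹ • (C * Aᵀ * B) - D) := by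
    rw [Matrix.invOf_eq_nonsing_inv, Matrix.inv_eq_left_inv hinv, neg_sub, Matrix.mul_smul,
      Matrix.smul_mul]
  rw [Matrix.det_fromBlocks₁₁, hschur, Matrix.det_neg, abs_mul, abs_mul, abs_pow, abs_neg, abs_one,
    one_pow, one_mul, abs_det_of_isHadamard hA]

lemma sqrt_mul_det_one_add_le_maxDet [Nonempty ι] {A : Matrix ι ι ℝ} (hA : A.IsHadamard)
    {B : Matrix ι κ ℝ} {C : Matrix κ ι ℝ} (hB : IsSignMatrix B) (hC : IsSignMatrix C) :
    √((Fintype.card ι : ℝ) ^ Fintype.card ι) *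
        (1 + (Fintype.card ι : ℝ)⁻¹ • (C * Aᵀ * B)).det ≤
      maxDet (Fintype.card ι + Fintype.card κ) := by
  have hneg_one (i j : κ) : |(-1 : Matrix κ κ ℝ) i j| ≤ 1 := by
    rcases eq_or_ne i j with rfl | hij <;> simp [*]
  obtain ⟨D, hD, hdet⟩ := exists_isSignMatrix_det_sub_le
    ((Fintype.card ι : ℝ)⁻¹ • (C * Aᵀ * B)) (-1) hneg_one
  have hsign : IsSignMatrix (Matrix.fromBlocks A B C D) := by
    rintro (i | i) (j | j)
    exacts [IsSignMatrix.of_isHadamard hA i j, hB i j, hC i j, hD i j]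
  rw [add_comm, ← sub_neg_eq_add]
  calc _ ≤ √((Fintype.card ι : ℝ) ^ Fintype.card ι) *
        |((Fintype.card ι : ℝ)⁻¹ • (C * Aᵀ * B) - D).det| := by
        gcongr
        exact hdet.trans (le_abs_self _)
    _ ≤ maxDet (Fintype.card ι + Fintype.card κ) := by
        simpa [abs_det_fromBlocks_of_isHadamard hA] using hsign.abs_det_le_maxDet

end Hadamard

section PrincipalMinors

variable {Ω : Type*} [Fintype Ω] [Nonempty Ω] {K : Matrix Ω Ω ℝ}

lemma expect_expect_mul_swap_le_one (hK : ∀ a, 𝔼 b, K a b ^ 2 ≤ 1) :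
    𝔼 a, 𝔼 b, K a b * K b a ≤ 1 := by
  calc 𝔼 a, 𝔼 b, K a b * K b a ≤ 𝔼 a, 𝔼 b, (K a b ^ 2 / 2 + K b a ^ 2 / 2) := by
        gcongr with a _ b _
        linarith [two_mul_le_add_sq (K a b) (K b a)]
    _ = 𝔼 a, 𝔼 b, K a b ^ 2 := by
        simp only [Finset.expect_add_distrib]
        rw [Finset.expect_comm _ _ (fun a b => K b a ^ 2 / 2)]
        simp only [← Finset.expect_add_distrib, add_halves]
    _ ≤ 1 := Finset.expect_le Finset.univ_nonempty fun a _ => hK a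

lemma neg_one_le_expect_mul_mul (hK : ∀ a, 𝔼 b, K a b ^ 2 ≤ 1) :
    -1 ≤ 𝔼 a, 𝔼 b, 𝔼 c, K a b * K b c * K c a := by
  have hsq : 𝔼 a, 𝔼 b, K a b ^ 2 ≤ 1 := Finset.expect_le Finset.univ_nonempty fun a _ => hK a
  have hpath : 𝔼 a, 𝔼 b, 𝔼 c, (K a b * K b c) ^ 2 ≤ 1 := by
    simp only [mul_pow, ← Finset.mul_expect]
    refine le_trans ?_ hsq
    gcongr with a _ b _
    exact mul_le_of_le_one_right (sq_nonneg _) (hK b)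
  have hedge : 𝔼 a, 𝔼 _b : Ω, 𝔼 c, K c a ^ 2 ≤ 1 := by
    simp only [Fintype.expect_const]
    rwa [Finset.expect_comm]
  calc -1 ≤ -((𝔼 a, 𝔼 b, 𝔼 c, (K a b * K b c) ^ 2) / 2 +
        (𝔼 a, 𝔼 _b : Ω, 𝔼 c, K c a ^ 2) / 2) := by
        linarith
    _ = 𝔼 a, 𝔼 b, 𝔼 c, -((K a b * K b c) ^ 2 / 2 + K c a ^ 2 / 2) := by
        simp only [Finset.expect_neg_distrib, Finset.expect_add_distrib, Finset.expect_div]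
    _ ≤ 𝔼 a, 𝔼 b, 𝔼 c, K a b * K b c * K c a := by
        gcongr with a _ b _ c _
        linarith [sq_nonneg (K a b * K b c + K c a)]

lemma exists_le_det_one_add_submatrix_one :
    ∃ b : Fin 1 → Ω, 𝔼 a, K a a + 1 ≤ (1 + K.submatrix b b).det := by
  obtain ⟨a, -, ha⟩ := Finset.exists_le_of_le_expect Finset.univ_nonempty
    (le_refl (𝔼 a, K a a))
  refine ⟨![a], ?_⟩
  simpa only [Matrix.det_fin_one, Matrix.add_apply, Matrix.one_apply_eq, Matrix.submatrix_apply,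
    Matrix.cons_val_zero, add_comm] using add_le_add_left ha 1

lemma expect_det_one_add_submatrix_two :
    𝔼 a, 𝔼 b, (1 + K.submatrix ![a, b] ![a, b]).det =
      (𝔼 a, K a a + 1) ^ 2 - 𝔼 a, 𝔼 b, K a b * K b a := by
  have hdet (a b : Ω) : (1 + K.submatrix ![a, b] ![a, b]).det =
      (K a a + 1) * (K b b + 1) - K a b * K b a := by
    simp only [Matrix.det_fin_two, Matrix.add_apply, Matrix.one_apply, Matrix.submatrix_apply,
      Matrix.cons_val, Fin.reduceEq, if_true, if_false]
    ring
  have hdiag : 𝔼 a, (K a a + 1) = 𝔼 a, K a a + 1 := by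
    rw [Finset.expect_add_distrib, Fintype.expect_const]
  simp only [hdet, Finset.expect_sub_distrib, ← Fintype.expect_mul_expect, hdiag, sq]

lemma expect_det_one_add_submatrix_three :
    𝔼 a, 𝔼 b, 𝔼 c, (1 + K.submatrix ![a, b, c] ![a, b, c]).det =
      (𝔼 a, K a a + 1) ^ 3 - 3 * (𝔼 a, K a a + 1) * 𝔼 a, 𝔼 b, K a b * K b a +
        2 * 𝔼 a, 𝔼 b, 𝔼 c, K a b * K b c * K c a := by
  let u (a : Ω) : ℝ := K a a + 1
  have hu : 𝔼 a, u a = 𝔼 a, K a a + 1 := by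
    rw [Finset.expect_add_distrib, Fintype.expect_const]
  have hdet (a b c : Ω) : (1 + K.submatrix ![a, b, c] ![a, b, c]).det =
      u a * (u b * u c) - u a * (K b c * K c b) - u b * (K a c * K c a) - K a b * K b a * u c +
        K a b * K b c * K c a + K a c * K c b * K b a := by
    simp only [Matrix.det_fin_three, Matrix.add_apply, Matrix.one_apply, Matrix.submatrix_apply,
      Matrix.cons_val, Fin.reduceEq, if_true, if_false, u]
    ring
  have hmiddle : 𝔼 a, 𝔼 b, 𝔼 c, u b * (K a c * K c a) =
      (𝔼 a, u a) * 𝔼 a, 𝔼 b, K a b * K b a := by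
    rw [Finset.expect_comm]
    simp only [← Finset.mul_expect, ← Finset.expect_mul]
  have hreverse : 𝔼 a, 𝔼 b, 𝔼 c, K a c * K c b * K b a = 𝔼 a, 𝔼 b, 𝔼 c, K a b * K b c * K c a :=
    Finset.expect_congr rfl fun a _ => Finset.expect_comm _ _ _
  simp only [hdet, Finset.expect_sub_distrib, Finset.expect_add_distrib]
  rw [hmiddle, hreverse]
  simp only [hu, ← Finset.mul_expect, ← Finset.expect_mul]
  ring

lemma exists_le_det_one_add_submatrix_two (hK : ∀ a, 𝔼 b, K a b ^ 2 ≤ 1) :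
    ∃ b : Fin 2 → Ω, (𝔼 a, K a a + 1) ^ 2 - 1 ≤ (1 + K.submatrix b b).det := by
  have hmean : (𝔼 a, K a a + 1) ^ 2 - 1 ≤
      𝔼 a, 𝔼 b, (1 + K.submatrix ![a, b] ![a, b]).det := by
    rw [expect_det_one_add_submatrix_two]
    linarith [expect_expect_mul_swap_le_one hK]
  obtain ⟨a, -, ha⟩ := Finset.exists_le_of_le_expect Finset.univ_nonempty hmean
  obtain ⟨b, -, hab⟩ := Finset.exists_le_of_le_expect Finset.univ_nonempty ha
  exact ⟨![a, b], hab⟩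

lemma exists_le_det_one_add_submatrix_three (hK : ∀ a, 𝔼 b, K a b ^ 2 ≤ 1)
    (hdiag : -1 ≤ 𝔼 a, K a a) :
    ∃ b : Fin 3 → Ω, (𝔼 a, K a a + 1) ^ 3 - 3 * (𝔼 a, K a a + 1) - 2 ≤
      (1 + K.submatrix b b).det := by
  have hmean : (𝔼 a, K a a + 1) ^ 3 - 3 * (𝔼 a, K a a + 1) - 2 ≤
      𝔼 a, 𝔼 b, 𝔼 c, (1 + K.submatrix ![a, b, c] ![a, b, c]).det := by
    rw [expect_det_one_add_submatrix_three]
    nlinarith [expect_expect_mul_swap_le_one hK, neg_one_le_expect_mul_mul hK]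
  obtain ⟨a, -, ha⟩ := Finset.exists_le_of_le_expect Finset.univ_nonempty hmean
  obtain ⟨b, -, hab⟩ := Finset.exists_le_of_le_expect Finset.univ_nonempty ha
  obtain ⟨c, -, habc⟩ := Finset.exists_le_of_le_expect Finset.univ_nonempty hab
  exact ⟨![a, b, c], habc⟩

end PrincipalMinors

section SignVector

variable {ι : Type*} [DecidableEq ι]

/-- The vector with entries `-1` on `S` and `1` elsewhere. Averaging over `S : Finset ι` is
averaging over a uniformly random vector of independent signs. -/
def signVec (S : Finset ι) (i : ι) : ℝ :=
  if i ∈ S then -1 else 1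

lemma signVec_eq_one_or_neg_one (S : Finset ι) (i : ι) : signVec S i = 1 ∨ signVec S i = -1 := by
  simp only [signVec]
  split_ifs <;> simp

lemma signVec_symmDiff (S T : Finset ι) (i : ι) :
    signVec (S ∆ T) i = signVec S i * signVec T i := by
  by_cases hS : i ∈ S <;> by_cases hT : i ∈ T <;> simp [signVec, Finset.mem_symmDiff, hS, hT]

lemma exists_signVec_eq [Finite ι] {a : ι → ℝ} (ha : ∀ i, a i = 1 ∨ a i = -1) :
    ∃ S : Finset ι, signVec S = a := by
  refine ⟨(Set.toFinite {i | a i = -1}).toFinset, funext fun i => ?_⟩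
  rcases ha i with h | h <;> norm_num [signVec, h]

variable [Fintype ι]

lemma expect_symmDiff (T : Finset ι) (f : Finset ι → ℝ) : 𝔼 S, f (T ∆ S) = 𝔼 S, f S :=
  Fintype.expect_equiv (symmDiff_right_involutive T).toPerm _ _ fun _ => rfl

lemma expect_signVec_mul_signVec (i j : ι) :
    𝔼 S, signVec S i * signVec S j = if i = j then 1 else 0 := by
  split_ifs with hij
  · subst hij
    have hsq (S : Finset ι) : signVec S i * signVec S i = 1 :=
      mul_self_eq_one_iff.2 (signVec_eq_one_or_neg_one S i)
    simp only [hsq, Fintype.expect_const]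
  · have hflip (S : Finset ι) : signVec ({i} ∆ S) i * signVec ({i} ∆ S) j =
        -(signVec S i * signVec S j) := by
      have hi : signVec {i} i = -1 := by simp [signVec]
      have hj : signVec {i} j = 1 := by simp [signVec, Ne.symm hij]
      rw [signVec_symmDiff, signVec_symmDiff, hi, hj, neg_one_mul, one_mul, neg_mul]
    have hneg := expect_symmDiff {i} fun S => signVec S i * signVec S j
    simp only [hflip, Finset.expect_neg_distrib] at hneg
    linarith

lemma expect_dotProduct_signVec_sq (u : ι → ℝ) : 𝔼 S, (u ⬝ᵥ signVec S) ^ 2 = u ⬝ᵥ u := by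
  calc 𝔼 S, (u ⬝ᵥ signVec S) ^ 2
      = 𝔼 S, ∑ i, ∑ j, u i * u j * (signVec S i * signVec S j) := by
        simp only [dotProduct, sq, Finset.sum_mul_sum, mul_mul_mul_comm]
    _ = ∑ i, ∑ j, u i * u j * if i = j then 1 else 0 := by
        simp only [Finset.expect_sum_comm, ← Finset.mul_expect, expect_signVec_mul_signVec]
    _ = u ⬝ᵥ u := by simp [dotProduct]

variable (ι) in
/-- The mean of `|∑ i, ε i|` over independent random signs `ε i`, that is, the mean distance from
the origin of a simple random walk after `Fintype.card ι` steps. -/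
noncomputable def meanAbsSignSum : ℝ :=
  𝔼 S : Finset ι, |∑ i, signVec S i|

lemma meanAbsSignSum_nonneg : 0 ≤ meanAbsSignSum ι :=
  Finset.expect_nonneg fun _ _ => abs_nonneg _

lemma expect_abs_dotProduct_signVec {a : ι → ℝ} (ha : ∀ i, a i = 1 ∨ a i = -1) :
    𝔼 S, |a ⬝ᵥ signVec S| = meanAbsSignSum ι := by
  obtain ⟨T, rfl⟩ := exists_signVec_eq ha
  simp only [dotProduct, ← signVec_symmDiff]
  exact expect_symmDiff T fun S => |∑ i, signVec S i|

lemma sum_range_choose_mul_sub (n j : ℕ) :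
    ∑ k ∈ Finset.range j, (n.choose k : ℝ) * (n - 2 * k) = j * n.choose j := by
  induction j with
  | zero => simp
  | succ j ih =>
    rw [Finset.sum_range_succ, ih]
    rcases le_or_gt j n with hj | hj
    · have hchoose : (n.choose (j + 1) : ℝ) * (j + 1) = n.choose j * (n - j) := by
        rw [← Nat.cast_sub hj]
        exact_mod_cast Nat.choose_succ_right_eq n j
      push_cast
      linarith
    · simp [Nat.choose_eq_zero_of_lt hj, Nat.choose_eq_zero_of_lt (Nat.lt_succ_of_lt hj)]

lemma sum_range_choose_mul_abs_sub (m : ℕ) :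
    ∑ k ∈ Finset.range (2 * m + 1), ((2 * m).choose k : ℝ) * |((2 * m : ℕ) : ℝ) - 2 * k| =
      2 * m * m.centralBinom := by
  have habs (k : ℕ) : ((2 * m).choose k : ℝ) * |((2 * m : ℕ) : ℝ) - 2 * k| =
      2 * (if k < m then ((2 * m).choose k : ℝ) * ((2 * m : ℕ) - 2 * k) else 0) -
        (2 * m).choose k * ((2 * m : ℕ) - 2 * k) := by
    push_cast
    split_ifs with hk
    · have : (k : ℝ) ≤ m := by exact_mod_cast hk.le
      rw [abs_of_nonneg (by linarith)]
      ring
    · have : (m : ℝ) ≤ k := by exact_mod_cast not_lt.1 hk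
      rw [abs_of_nonpos (by linarith)]
      ring
  have hfilter : (Finset.range (2 * m + 1)).filter (· < m) = Finset.range m := by
    ext k
    simp only [Finset.mem_filter, Finset.mem_range]
    omega
  simp only [habs, Finset.sum_sub_distrib, ← Finset.mul_sum, ← Finset.sum_filter, hfilter,
    sum_range_choose_mul_sub]
  simp [Nat.centralBinom, mul_assoc]

lemma meanAbsSignSum_eq {m : ℕ} (hm : Fintype.card ι = 2 * m) :
    meanAbsSignSum ι = 2 * m * m.centralBinom / 2 ^ (2 * m) := by
  have hsum (S : Finset ι) : ∑ i, signVec S i = (2 * m : ℕ) - 2 * S.card := by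
    have hsign (i : ι) : signVec S i = 1 - 2 * if i ∈ S then 1 else 0 := by
      unfold signVec
      split_ifs <;> norm_num
    simp [hsign, Finset.sum_sub_distrib, hm, mul_comm]
  have hcard := Finset.sum_powerset_apply_card (fun k : ℕ => |((2 * m : ℕ) : ℝ) - 2 * k|)
    (x := (Finset.univ : Finset ι))
  rw [Finset.powerset_univ, Finset.card_univ, hm] at hcard
  simp only [nsmul_eq_mul, sum_range_choose_mul_abs_sub] at hcard
  simp only [meanAbsSignSum, Fintype.expect_eq_sum_div_card, hsum, hcard, Fintype.card_finset, hm,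
    Nat.cast_pow, Nat.cast_ofNat]

lemma four_pow_mul_two_le_pi_mul_centralBinom_sq (m : ℕ) :
    (2 : ℝ) ^ (4 * m) * 2 ≤ Real.pi * (m.centralBinom ^ 2 * (2 * m + 1)) := by
  have hW := Real.Wallis.W_le m
  have hfact : ((2 * m).factorial : ℝ) = m.centralBinom * (m.factorial : ℝ) ^ 2 := by
    have := Nat.add_choose_mul_factorial_mul_factorial m m
    rw [← two_mul] at this
    rw [Nat.centralBinom, ← this]
    push_cast
    ring
  have hbinom : (0 : ℝ) < m.centralBinom := by exact_mod_cast m.centralBinom_pos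
  rw [Real.Wallis.W_eq_factorial_ratio, hfact, mul_pow, ← pow_mul, mul_right_comm,
    mul_div_mul_right _ _ (by positivity), div_le_iff₀ (by positivity)] at hW
  linarith

lemma two_div_pi_mul_sq_le_meanAbsSignSum_sq (hcard : Even (Fintype.card ι)) :
    2 / Real.pi * (Fintype.card ι : ℝ) ^ 2 ≤
      meanAbsSignSum ι ^ 2 * (Fintype.card ι + 1) := by
  obtain ⟨m, hm⟩ := even_iff_exists_two_mul.1 hcard
  rw [meanAbsSignSum_eq hm, hm, div_mul_eq_mul_div, div_le_iff₀ Real.pi_pos, div_pow,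
    ← pow_mul, div_mul_eq_mul_div, div_mul_eq_mul_div, le_div_iff₀ (by positivity)]
  have hW := mul_le_mul_of_nonneg_right (four_pow_mul_two_le_pi_mul_centralBinom_sq m)
    (sq_nonneg (2 * m : ℝ))
  rw [show 2 * m * 2 = 4 * m by ring]
  push_cast
  linarith

end SignVector

section BorderKernel

variable {ι : Type*} [Fintype ι] [DecidableEq ι]

/-- The sign matrix whose row `S` is the new row that best matches the new column `signVec S`
when the matrix `A` is bordered: its entry `j` is the sign of `Aᵀ j ⬝ᵥ signVec S`, with sign `1`
at zero. -/
noncomputable def matchingRows (A : Matrix ι ι ℝ) : Matrix (Finset ι) ι ℝ :=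
  Matrix.of fun S j => if 0 ≤ Aᵀ j ⬝ᵥ signVec S then 1 else -1

/-- The matrix that collects the values `C * A⁻¹ * B` of the Schur complement over all choices of
a column `signVec T` of `B` and a matching row `S` of `C`; here `A⁻¹ = (Fintype.card ι)⁻¹ • Aᵀ` for
the Hadamard matrices `A` in question. -/
noncomputable def borderKernel (A : Matrix ι ι ℝ) : Matrix (Finset ι) (Finset ι) ℝ :=
  (Fintype.card ι : ℝ)⁻¹ • (matchingRows A * Aᵀ * (Matrix.of signVec : Matrix (Finset ι) ι ℝ)ᵀ)

lemma isSignMatrix_matchingRows (A : Matrix ι ι ℝ) : IsSignMatrix (matchingRows A) := by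
  intro S j
  simp only [matchingRows, Matrix.of_apply]
  split_ifs <;> simp

lemma borderKernel_apply_self (A : Matrix ι ι ℝ) (S : Finset ι) :
    borderKernel A S S = (Fintype.card ι : ℝ)⁻¹ * ∑ j, |Aᵀ j ⬝ᵥ signVec S| := by
  rw [borderKernel, Matrix.mul_assoc, Matrix.smul_apply, Matrix.mul_apply, smul_eq_mul]
  refine congrArg _ (Finset.sum_congr rfl fun j _ => ?_)
  change (if 0 ≤ Aᵀ j ⬝ᵥ signVec S then 1 else -1) * Aᵀ j ⬝ᵥ signVec S = _
  split_ifs with hj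
  · rw [abs_of_nonneg hj, one_mul]
  · rw [abs_of_neg (not_le.1 hj), neg_one_mul]

variable [Nonempty ι]

lemma expect_borderKernel_apply_self {A : Matrix ι ι ℝ} (hA : IsSignMatrix A) :
    𝔼 S, borderKernel A S S = meanAbsSignSum ι := by
  have hcol (j : ι) : 𝔼 S, |Aᵀ j ⬝ᵥ signVec S| = meanAbsSignSum ι :=
    expect_abs_dotProduct_signVec fun i => hA i j
  simp only [borderKernel_apply_self, ← Finset.mul_expect, Finset.expect_sum_comm, hcol,
    Finset.sum_const, Finset.card_univ, nsmul_eq_mul]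
  exact inv_mul_cancel_left₀ (by positivity) _

lemma expect_borderKernel_sq {A : Matrix ι ι ℝ} (hA : A.IsHadamard) (S : Finset ι) :
    𝔼 T, borderKernel A S T ^ 2 = 1 := by
  set R := matchingRows A
  have hRR : (R * Rᵀ) S S = Fintype.card ι := by
    have hsq (j : ι) : R S j * R S j = 1 :=
      mul_self_eq_one_iff.2 (isSignMatrix_matchingRows A S j)
    simp [Matrix.mul_apply, hsq]
  have hnorm : (R * Aᵀ) S ⬝ᵥ (R * Aᵀ) S = (Fintype.card ι : ℝ) ^ 2 := by
    calc (R * Aᵀ) S ⬝ᵥ (R * Aᵀ) S = (R * Aᵀ * (R * Aᵀ)ᵀ) S S := rfl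
      _ = (R * (Aᵀ * A) * Rᵀ) S S := by
        rw [Matrix.transpose_mul, Matrix.transpose_transpose]
        simp only [Matrix.mul_assoc]
      _ = (Fintype.card ι : ℝ) ^ 2 := by
        rw [transpose_mul_self_of_isHadamard hA, Matrix.mul_smul, Matrix.mul_one, Matrix.smul_mul,
          Matrix.smul_apply, hRR, smul_eq_mul, sq]
  calc 𝔼 T, borderKernel A S T ^ 2
      = 𝔼 T, ((Fintype.card ι : ℝ)⁻¹ ^ 2 * ((R * Aᵀ) S ⬝ᵥ signVec T) ^ 2) :=
        Finset.expect_congr rfl fun T _ => mul_pow _ _ 2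
    _ = 1 := by
        rw [← Finset.mul_expect, expect_dotProduct_signVec_sq, hnorm, ← mul_pow,
          inv_mul_cancel₀ (by positivity), one_pow]

lemma mul_pow_card_lt_maxDet_sq {A : Matrix ι ι ℝ} (hA : A.IsHadamard) {d : ℕ}
    {b : Fin d → Finset ι} {t y : ℝ} (ht : 0 ≤ t) (hyt : y < t ^ 2)
    (hb : t ≤ (1 + (borderKernel A).submatrix b b).det) :
    y * (Fintype.card ι : ℝ) ^ Fintype.card ι < maxDet (Fintype.card ι + d) ^ 2 := by
  have hdet : √((Fintype.card ι : ℝ) ^ Fintype.card ι) * t ≤ maxDet (Fintype.card ι + d) := by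
    refine (mul_le_mul_of_nonneg_left hb (Real.sqrt_nonneg _)).trans ?_
    have hborder := sqrt_mul_det_one_add_le_maxDet hA
      (B := (Matrix.of signVec)ᵀ.submatrix id b) (C := (matchingRows A).submatrix b id)
      (fun i k => signVec_eq_one_or_neg_one (b k) i) fun k j => isSignMatrix_matchingRows A (b k) j
    rwa [Fintype.card_fin] at hborder
  calc y * (Fintype.card ι : ℝ) ^ Fintype.card ι
      < t ^ 2 * (Fintype.card ι : ℝ) ^ Fintype.card ι := by gcongr
    _ = (√((Fintype.card ι : ℝ) ^ Fintype.card ι) * t) ^ 2 := by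
        rw [mul_pow, Real.sq_sqrt (by positivity), mul_comm]
    _ ≤ maxDet (Fintype.card ι + d) ^ 2 := by gcongr

end BorderKernel

section Estimates

lemma two_div_pi_mem_Ioo : 2 / Real.pi ∈ Set.Ioo (0.634 : ℝ) 0.637 := by
  constructor
  · rw [lt_div_iff₀ Real.pi_pos]
    linarith [Real.pi_lt_d2]
  · rw [div_lt_iff₀ Real.pi_pos]
    linarith [Real.pi_gt_d2]

variable {ι : Type*} [Fintype ι] [DecidableEq ι]

lemma two_div_pi_mul_sub_one_le_meanAbsSignSum_sq (hcard : Even (Fintype.card ι)) :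
    2 / Real.pi * (Fintype.card ι - 1) ≤ meanAbsSignSum ι ^ 2 := by
  refine le_of_mul_le_mul_right ?_ (by positivity : (0 : ℝ) < Fintype.card ι + 1)
  linarith [two_div_pi_mul_sq_le_meanAbsSignSum_sq hcard, two_div_pi_mem_Ioo.1]

lemma one_le_meanAbsSignSum (hcard : Even (Fintype.card ι)) (hfour : 4 ≤ Fintype.card ι) :
    1 ≤ meanAbsSignSum ι := by
  have hfour' : (4 : ℝ) ≤ Fintype.card ι := by exact_mod_cast hfour
  refine (one_le_sq_iff₀ meanAbsSignSum_nonneg).1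
    (le_trans ?_ (two_div_pi_mul_sub_one_le_meanAbsSignSum_sq hcard))
  nlinarith [two_div_pi_mem_Ioo.1]

lemma le_meanAbsSignSum_of_eight_le_card (hcard : Even (Fintype.card ι))
    (height : 8 ≤ Fintype.card ι) : 2.12 ≤ meanAbsSignSum ι := by
  have height' : (8 : ℝ) ≤ Fintype.card ι := by exact_mod_cast height
  have hratio : 64 / 9 * ((Fintype.card ι : ℝ) + 1) ≤ (Fintype.card ι : ℝ) ^ 2 := by nlinarith
  have hsq : 2 / Real.pi * (64 / 9) ≤ meanAbsSignSum ι ^ 2 := by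
    refine le_of_mul_le_mul_right ?_ (by positivity : (0 : ℝ) < Fintype.card ι + 1)
    nlinarith [two_div_pi_mul_sq_le_meanAbsSignSum_sq hcard, two_div_pi_mem_Ioo.1]
  refine (sq_le_sq₀ (by norm_num) meanAbsSignSum_nonneg).1 (le_trans ?_ hsq)
  linarith [two_div_pi_mem_Ioo.1]

lemma add_pow_three_lt_sq {x : ℝ} (hx : 2.12 ≤ x) :
    (x ^ 2 + 2.55) ^ 3 < ((x + 1) ^ 3 - 3 * (x + 1) - 2) ^ 2 := by
  obtain ⟨t, ht, rfl⟩ : ∃ t : ℝ, 0 ≤ t ∧ x = 2.12 + t := ⟨x - 2.12, by linarith, by ring⟩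
  rw [← sub_pos]
  ring_nf
  positivity

variable {A : Matrix ι ι ℝ}

lemma two_div_pi_mul_lt_maxDet_sq_one (hA : A.IsHadamard) (hfour : 4 ≤ Fintype.card ι) :
    2 / Real.pi * (Fintype.card ι + 1) * (Fintype.card ι : ℝ) ^ Fintype.card ι <
      maxDet (Fintype.card ι + 1) ^ 2 := by
  have : Nonempty ι := Fintype.card_pos_iff.1 (by lia)
  have heven := even_card_of_isHadamard hA (by lia)
  have hone := one_le_meanAbsSignSum heven hfour
  obtain ⟨b, hb⟩ := exists_le_det_one_add_submatrix_one (K := borderKernel A)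
  rw [expect_borderKernel_apply_self (.of_isHadamard hA)] at hb
  refine mul_pow_card_lt_maxDet_sq hA (by linarith) ?_ hb
  linarith [two_div_pi_mul_sub_one_le_meanAbsSignSum_sq heven, two_div_pi_mem_Ioo.2]

lemma two_div_pi_mul_pow_lt_maxDet_sq_two (hA : A.IsHadamard) (hfour : 4 ≤ Fintype.card ι) :
    (2 / Real.pi * (Fintype.card ι + 2)) ^ 2 * (Fintype.card ι : ℝ) ^ Fintype.card ι <
      maxDet (Fintype.card ι + 2) ^ 2 := by
  have : Nonempty ι := Fintype.card_pos_iff.1 (by lia)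
  have heven := even_card_of_isHadamard hA (by lia)
  have hone := one_le_meanAbsSignSum heven hfour
  obtain ⟨b, hb⟩ := exists_le_det_one_add_submatrix_two fun S => (expect_borderKernel_sq hA S).le
  rw [expect_borderKernel_apply_self (.of_isHadamard hA)] at hb
  refine mul_pow_card_lt_maxDet_sq hA (by nlinarith) ?_ hb
  gcongr
  linarith [two_div_pi_mul_sub_one_le_meanAbsSignSum_sq heven, two_div_pi_mem_Ioo.2]

lemma two_div_pi_mul_pow_lt_maxDet_sq_three (hA : A.IsHadamard) (height : 8 ≤ Fintype.card ι) :
    (2 / Real.pi * (Fintype.card ι + 3)) ^ 3 * (Fintype.card ι : ℝ) ^ Fintype.card ι <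
      maxDet (Fintype.card ι + 3) ^ 2 := by
  have : Nonempty ι := Fintype.card_pos_iff.1 (by lia)
  have heven := even_card_of_isHadamard hA (by lia)
  have hmean := le_meanAbsSignSum_of_eight_le_card heven height
  obtain ⟨b, hb⟩ := exists_le_det_one_add_submatrix_three
    (fun S => (expect_borderKernel_sq hA S).le)
    (by rw [expect_borderKernel_apply_self (.of_isHadamard hA)]; linarith)
  rw [expect_borderKernel_apply_self (.of_isHadamard hA)] at hb
  refine mul_pow_card_lt_maxDet_sq hA ?_ (lt_of_le_of_lt ?_ (add_pow_three_lt_sq hmean)) hb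
  · nlinarith [pow_pos (by linarith : 0 < meanAbsSignSum ι) 3]
  · gcongr
    linarith [two_div_pi_mul_sub_one_le_meanAbsSignSum_sq heven, two_div_pi_mem_Ioo.2]

lemma le_maxDet_seven : 512 ≤ maxDet 7 := by
  have hH : IsHadamardOrder 8 := by
    simpa using (IsHadamardOrder.of_isHadamard isHadamard_two).two_mul.two_mul
  have hminor := hH.sqrt_le_mul_maxDet
  rw [show (((7 + 1 : ℕ) : ℝ) ^ (7 + 1)) = 4096 ^ 2 by norm_num,
    Real.sqrt_sq (by norm_num)] at hminor
  norm_num at hminor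
  linarith

lemma IsHadamardOrder.two_div_pi_mul_pow_lt {h d : ℕ} (hH : IsHadamardOrder h) (hh : 4 ≤ h)
    (hd_pos : 0 < d) (hd : d ≤ 3) :
    (2 / Real.pi * ((h : ℝ) + d)) ^ d * (h : ℝ) ^ h < maxDet (h + d) ^ 2 := by
  obtain ⟨A, hA⟩ := (isHadamardOrder_iff h).1 hH
  have hdvd : 4 ∣ h := by simpa using four_dvd_card_of_isHadamard hA (by simp; lia)
  interval_cases d
  · simpa using two_div_pi_mul_lt_maxDet_sq_one hA (by simpa)
  · simpa using two_div_pi_mul_pow_lt_maxDet_sq_two hA (by simpa)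
  · rcases (by lia : h = 4 ∨ 8 ≤ h) with rfl | height
    · calc (2 / Real.pi * (((4 : ℕ) : ℝ) + (3 : ℕ))) ^ 3 * ((4 : ℕ) : ℝ) ^ 4
          ≤ (0.637 * (((4 : ℕ) : ℝ) + (3 : ℕ))) ^ 3 * ((4 : ℕ) : ℝ) ^ 4 := by
            gcongr
            exact two_div_pi_mem_Ioo.2.le
        _ < 512 ^ 2 := by norm_num
        _ ≤ maxDet 7 ^ 2 := by gcongr; exact le_maxDet_seven
    · simpa using two_div_pi_mul_pow_lt_maxDet_sq_three hA (by simpa)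

end Estimates

section Normalization

lemma rpow_natCast_div_two {x : ℝ} (hx : 0 ≤ x) (k : ℕ) : x ^ ((k : ℝ) / 2) = √(x ^ k) := by
  rw [Real.sqrt_eq_rpow, ← Real.rpow_natCast_mul hx, mul_one_div]

lemma add_pow_le_pow_mul_exp (h d : ℕ) :
    ((h : ℝ) + d) ^ h ≤ (h : ℝ) ^ h * Real.exp 1 ^ d := by
  rcases Nat.eq_zero_or_pos h with rfl | hh
  · simp
  calc ((h : ℝ) + d) ^ h = (h : ℝ) ^ h * (d / h + 1) ^ h := by
        rw [← mul_pow]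
        congr 1
        field_simp
        ring
    _ ≤ (h : ℝ) ^ h * Real.exp (d / h) ^ h := by
        gcongr
        exact Real.add_one_le_exp _
    _ = (h : ℝ) ^ h * Real.exp 1 ^ d := by
        rw [← Real.exp_nat_mul, ← Real.exp_nat_mul]
        congr 2
        field_simp

lemma rpow_lt_maxDet_div_rpow {h d : ℕ}
    (hlt : (2 / Real.pi * ((h : ℝ) + d)) ^ d * (h : ℝ) ^ h < maxDet (h + d) ^ 2) :
    (2 / (Real.pi * Real.exp 1)) ^ ((d : ℝ) / 2) <
      maxDet (h + d) / ((h + d : ℕ) : ℝ) ^ (((h + d : ℕ) : ℝ) / 2) := by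
  have hpos : (0 : ℝ) < ((h + d : ℕ) : ℝ) ^ (h + d) := by exact_mod_cast Nat.pow_self_pos
  rw [rpow_natCast_div_two (by positivity), rpow_natCast_div_two (by positivity),
    lt_div_iff₀ (Real.sqrt_pos.2 hpos), ← Real.sqrt_mul (by positivity),
    ← Real.sqrt_sq (maxDet_nonneg (h + d))]
  refine Real.sqrt_lt_sqrt (by positivity) ?_
  push_cast
  calc (2 / (Real.pi * Real.exp 1)) ^ d * ((h : ℝ) + d) ^ (h + d)
      = (2 / (Real.pi * Real.exp 1) * ((h : ℝ) + d)) ^ d * ((h : ℝ) + d) ^ h := by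
        rw [mul_pow, pow_add]
        ring
    _ ≤ (2 / (Real.pi * Real.exp 1) * ((h : ℝ) + d)) ^ d * ((h : ℝ) ^ h * Real.exp 1 ^ d) := by
        gcongr
        exact add_pow_le_pow_mul_exp h d
    _ = (2 / Real.pi * ((h : ℝ) + d)) ^ d * (h : ℝ) ^ h := by
        rw [mul_left_comm, ← mul_pow, mul_comm]
        congr 2
        field_simp
    _ < maxDet (h + d) ^ 2 := hlt

end Normalization

/-- Let `n = h + d` where `h ≥ 4` is a Hadamard order and `0 ≤ d ≤ 3`.
Then `D(n)/n^{n/2} ≥ (2/(πe))^{d/2}`, with strict inequality if `d > 0`. -/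
theorem normalized_maxDet_lower_bound_small_d (h d n : ℕ)
    (hh : 4 ≤ h) (hH : IsHadamardOrder h) (hd : d ≤ 3) (hn : n = h + d) :
    maxDet n / (n : ℝ) ^ ((n : ℝ) / 2) ≥
      (2 / (Real.pi * Real.exp 1)) ^ ((d : ℝ) / 2) ∧
    (0 < d →
      maxDet n / (n : ℝ) ^ ((n : ℝ) / 2) >
        (2 / (Real.pi * Real.exp 1)) ^ ((d : ℝ) / 2)) := by
  subst hn
  have hstrict (hd_pos : 0 < d) := rpow_lt_maxDet_div_rpow
    (hH.two_div_pi_mul_pow_lt hh hd_pos hd)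
  refine ⟨?_, hstrict⟩
  rcases Nat.eq_zero_or_pos d with rfl | hd_pos
  · have hpos : (0 : ℝ) < h := by positivity
    rw [Nat.cast_zero, zero_div, Real.rpow_zero, add_zero, rpow_natCast_div_two hpos.le, ge_iff_le,
      one_le_div (by positivity)]
    exact hH.sqrt_le_maxDet
  · exact (hstrict hd_pos).le
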